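/- Let $N \ge 1$. There exists a constant $C = C(N) > 0$ such that for every Schwartz function $u : \mathbb{R}^N \to \mathbb{C}$, $\int_{\mathbb{R}^N} |u(x)|^{2+\frac{4}{N}}\,dx \le C\,\Big(\int_{\mathbb{R}^N} |u(x)|^2\,dx + \int_{\mathbb{R}^N} |\Delta u(x)|^2\,dx\Big)\,\Big(\sup_{x \in \mathbb{R}^N} \|u\|_{L^2(Q_1(x))}\Big)^{\frac{4}{N}}$, where $Q_1(x)$ denotes the cube centered at $x$ whose edge has length $1$ and $\|u\|_{L^2(Q_1(x))} = \big(\int_{Q_1(x)} |u(y)|^2\,dy\big)^{1/2}$. -/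

import Mathlib

/-!
The function is localised by a smooth bump `χ(· - y)` supported in the unit cube centred at `y`.
For compactly supported `v` the Gagliardo–Nirenberg inequality
`∫ |v|^(2+4/N) ≤ C ∫ |Dv|² (∫ |v|²)^(2/N)` holds (`gn_global`), by Sobolev's inequality and Hölder.
With `v = χ(· - y) u` the last factor is at most the local mass `sup_y ‖u‖²_{L²(Q₁(y))}` to the
power `2/N`. Integrating over all `y ∈ ℝ^N` and using Tonelli, `∫ |v|^(2+4/N)` becomes a positive
constant times `∫ |u|^(2+4/N)`, and `∫ |Dv|²` at most a constant times `∫ |u|² + ∫ |Du|²`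
(`gn_avg`); the continuous average
replaces a sum over a lattice of cubes. Finally `∫ |Du|² ≤ ∫ |u|² + ∫ |Δu|²` by integration by
parts (`lintegral_fderiv_sq_le`).
-/

open MeasureTheory

/-- The partial derivative `∂ᵢ f` of `f : ℝ^N → ℂ` in the `i`-th coordinate direction. -/
noncomputable def pderiv' {N : ℕ} (i : Fin N) (f : EuclideanSpace ℝ (Fin N) → ℂ) :
    EuclideanSpace ℝ (Fin N) → ℂ :=
  fun x => fderiv ℝ f x (EuclideanSpace.single i (1 : ℝ))

/-- The Laplacian `Δ f = ∑ᵢ ∂ᵢ² f` of `f : ℝ^N → ℂ`. -/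
noncomputable def lap {N : ℕ} (f : EuclideanSpace ℝ (Fin N) → ℂ) :
    EuclideanSpace ℝ (Fin N) → ℂ :=
  fun x => ∑ i : Fin N, pderiv' i (pderiv' i f) x

open Module ENNReal NNReal

/-! ### The gradient is controlled by `u` and its Laplacian -/

/-- The operator norm is at most the Hilbert–Schmidt norm, by Cauchy–Schwarz. -/
lemma opNorm_sq_le_sum {N : ℕ} (L : EuclideanSpace ℝ (Fin N) →L[ℝ] ℂ) :
    ‖L‖ ^ 2 ≤ ∑ i, ‖L (EuclideanSpace.single i (1 : ℝ))‖ ^ 2 := by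
  set S := ∑ i, ‖L (EuclideanSpace.single i (1 : ℝ))‖ ^ 2
  have hS : 0 ≤ S := by positivity
  have h : ‖L‖ ≤ √S := by
    refine L.opNorm_le_bound (Real.sqrt_nonneg _) fun y => ?_
    have hy : L y = ∑ i, y i • L (EuclideanSpace.single i (1 : ℝ)) := by
      conv_lhs => rw [← (EuclideanSpace.basisFun (Fin N) ℝ).sum_repr y]
      simp
    refine abs_le_of_sq_le_sq' ?_ (by positivity) |>.2
    rw [mul_pow, Real.sq_sqrt hS, EuclideanSpace.real_norm_sq_eq, hy, mul_comm]
    calc _ ≤ (∑ i, |y i| * ‖L (EuclideanSpace.single i (1 : ℝ))‖) ^ 2 := by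
          gcongr
          refine (norm_sum_le _ _).trans_eq ?_
          simp
      _ ≤ (∑ i, |y i| ^ 2) * S := Finset.sum_mul_sq_le_sq_mul_sq _ _ _
      _ = _ := by simp
  calc ‖L‖ ^ 2 ≤ √S ^ 2 := by gcongr
    _ = S := Real.sq_sqrt hS

open scoped LineDeriv Laplacian in
lemma lap_eq {N : ℕ} (u : SchwartzMap (EuclideanSpace ℝ (Fin N)) ℂ) :
    lap (fun y => u y) = Δ u := by
  ext x
  have hp : ∀ (i : Fin N) (f : SchwartzMap (EuclideanSpace ℝ (Fin N)) ℂ),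
      pderiv' i f = ∂_{EuclideanSpace.single i (1 : ℝ)} f := fun i f => by
    ext x
    rw [SchwartzMap.lineDerivOp_apply_eq_fderiv]; rfl
  rw [SchwartzMap.laplacian_eq_sum (EuclideanSpace.basisFun (Fin N) ℝ)]
  simp only [lap, _root_.sum_apply, EuclideanSpace.basisFun_apply]
  refine Finset.sum_congr rfl fun i _ => ?_
  rw [hp i u, hp]

lemma integrable_norm_sq {N : ℕ} (f : SchwartzMap (EuclideanSpace ℝ (Fin N)) ℂ) :
    Integrable fun x => ‖f x‖ ^ 2 := by
  simpa using (f.memLp 2).integrable_norm_pow (by norm_num)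

open scoped LineDeriv Laplacian in
/-- Integrating by parts, `∑ᵢ ∫ |∂ᵢu|² = -∫ ⟨Δu, u⟩`, and the right-hand side is at most
`∫ |u|² + ∫ |Δu|²` by Cauchy–Schwarz and Young. -/
lemma lintegral_fderiv_sq_le {N : ℕ} (u : SchwartzMap (EuclideanSpace ℝ (Fin N)) ℂ) :
    ∫⁻ x, ‖fderiv ℝ u x‖ₑ ^ 2 ≤
      ENNReal.ofReal ((∫ x, ‖u x‖ ^ 2) + ∫ x, ‖lap (fun y => u y) x‖ ^ 2) := by
  rw [lap_eq]
  let e : Fin N → EuclideanSpace ℝ (Fin N) := fun i => EuclideanSpace.single i (1 : ℝ)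
  have hsum : ∑ i, ∫ x, ‖∂_{e i} u x‖ ^ 2 = - ∫ x, inner ℝ (Δ u x) (u x) := by
    have h1 : ∀ i, ∫ x, ‖∂_{e i} u x‖ ^ 2 = - ∫ x, inner ℝ (∂_{e i} (∂_{e i} u) x) (u x) :=
      fun i => by
        have := SchwartzMap.integral_bilinear_lineDerivOp_right_eq_neg_left (μ := volume)
          (∂_{e i} u) u (innerSL ℝ) (e i)
        calc _ = ∫ x, inner ℝ (∂_{e i} u x) (∂_{e i} u x) := by
              simp only [real_inner_self_eq_norm_sq]
          _ = _ := this
    simp_rw [h1]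
    rw [Finset.sum_neg_distrib, ← integral_finsetSum]
    · congr 2 with x
      rw [SchwartzMap.laplacian_eq_sum (EuclideanSpace.basisFun (Fin N) ℝ)]
      simp [sum_inner, e]
    · exact fun i _ => (SchwartzMap.pairing (innerSL ℝ) (∂_{e i} (∂_{e i} u)) u).integrable
  have hle : - ∫ x, inner ℝ (Δ u x) (u x) ≤ (∫ x, ‖u x‖ ^ 2) + ∫ x, ‖Δ u x‖ ^ 2 := by
    rw [← integral_neg, ← integral_add (integrable_norm_sq _) (integrable_norm_sq _)]
    refine integral_mono (SchwartzMap.pairing (innerSL ℝ) (Δ u) u).integrable.neg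
      ((integrable_norm_sq _).add (integrable_norm_sq _)) fun x => ?_
    have := abs_real_inner_le_norm (Δ u x) (u x)
    have := neg_abs_le (inner ℝ (Δ u x) (u x))
    simp only
    nlinarith [sq_nonneg (‖Δ u x‖ - ‖u x‖), sq_nonneg (‖Δ u x‖), sq_nonneg ‖u x‖]
  refine le_trans ?_ (ENNReal.ofReal_le_ofReal (hsum.trans_le hle))
  rw [← integral_finsetSum _ fun i _ => integrable_norm_sq _,
    ofReal_integral_eq_lintegral_ofReal (integrable_finsetSum _ fun i _ => integrable_norm_sq _)
      (.of_forall fun x => by positivity)]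
  refine lintegral_mono fun x => ?_
  rw [← ofReal_norm, ← ENNReal.ofReal_pow (norm_nonneg _)]
  refine ENNReal.ofReal_le_ofReal ((opNorm_sq_le_sum _).trans_eq ?_)
  simp only [SchwartzMap.lineDerivOp_apply_eq_fderiv, e]

/-! ### The global inequality for compactly supported functions -/

lemma lintegral_cauchy_schwarz {α : Type*} [MeasurableSpace α] {μ : Measure α} {f g : α → ℝ≥0∞}
    (hf : AEMeasurable f μ) (hg : AEMeasurable g μ) :
    (∫⁻ a, f a * g a ∂μ) ^ 2 ≤ (∫⁻ a, f a ^ 2 ∂μ) * ∫⁻ a, g a ^ 2 ∂μ := by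
  have h := lintegral_mul_norm_pow_le (μ := μ) (hf.pow_const (2 : ℕ)) (hg.pow_const (2 : ℕ))
    (p := 1 / 2) (q := 1 / 2) (by norm_num) (by norm_num) (by norm_num)
  have e : ∀ x : ℝ≥0∞, (x ^ 2) ^ (1 / 2 : ℝ) = x := fun x => by
    rw [← ENNReal.rpow_natCast, ← ENNReal.rpow_mul]; norm_num
  have e' : ∀ x : ℝ≥0∞, (x ^ (1 / 2 : ℝ)) ^ 2 = x := fun x => by
    rw [← ENNReal.rpow_natCast, ← ENNReal.rpow_mul]; norm_num
  simp only [e] at h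
  calc _ ≤ _ := pow_le_pow_left' h 2
    _ = _ := by rw [mul_pow, e', e']

lemma enorm_fderiv_pow_two_le {E : Type*} [NormedAddCommGroup E] [NormedSpace ℝ E]
    {v : E → ℂ} (hv : ContDiff ℝ 1 v) (x : E) :
    ‖fderiv ℝ (fun y => v y ^ 2) x‖ₑ ≤ 2 * (‖v x‖ₑ * ‖fderiv ℝ v x‖ₑ) := by
  have hd : DifferentiableAt ℝ v x := hv.differentiable one_ne_zero x
  have : fderiv ℝ (fun y => v y ^ 2) x = (2 * v x) • fderiv ℝ v x := by
    rw [(hd.hasFDerivAt.pow 2).fderiv]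
    simp
  rw [this, enorm_smul, enorm_mul, mul_assoc]
  simp [enorm_eq_nnnorm]

/-- The endpoint Sobolev inequality in dimension one, which Mathlib's Gagliardo–Nirenberg–Sobolev
inequality (dimension at least two) does not cover: the fundamental theorem of calculus,
transported from `ℝ` by a linear isometry. -/
lemma enorm_le_lintegral_fderiv_of_finrank_one {E : Type*} [NormedAddCommGroup E]
    [InnerProductSpace ℝ E] [MeasurableSpace E] [BorelSpace E] [FiniteDimensional ℝ E]
    (hE : finrank ℝ E = 1) {w : E → ℂ} (hw : ContDiff ℝ 1 w) (hc : HasCompactSupport w) (x : E) :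
    ‖w x‖ₑ ≤ ∫⁻ y, ‖fderiv ℝ w y‖ₑ := by
  have e : ℝ ≃ₗᵢ[ℝ] E := (stdOrthonormalBasis ℝ ℝ).equiv (stdOrthonormalBasis ℝ E)
    (finCongr (by simp [hE]))
  rw [← e.measurePreserving.lintegral_comp_emb e.toHomeomorph.measurableEmbedding]
  have h := HasCompactSupport.enorm_le_lintegral_Ici_deriv (f := w ∘ e)
    (hw.comp e.contDiff) (hc.comp_homeomorph e.toHomeomorph) (e.symm x)
  simp only [Function.comp, LinearIsometryEquiv.apply_symm_apply] at h
  refine h.trans ((setLIntegral_le_lintegral _ _).trans (lintegral_mono fun t => ?_))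
  have hd : HasDerivAt (w ∘ e) (fderiv ℝ w (e t) (e 1)) t := by
    have h1 := ((hw.differentiable one_ne_zero) (e t)).hasFDerivAt.comp t
      e.toContinuousLinearEquiv.hasFDerivAt
    simpa only [ContinuousLinearMap.comp_apply] using! h1.hasDerivAt
  rw [hd.deriv]
  refine (ContinuousLinearMap.le_opENorm _ _).trans ?_
  simp [enorm_eq_nnnorm]

/-- The mass-critical Gagliardo–Nirenberg inequality for compactly supported `v`. For `N ≥ 3` it
interpolates the Sobolev embedding into `L^{2N/(N-2)}` with `L²`; for `N ≤ 2`, where that embedding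
is unavailable, the `L¹` Sobolev inequality is applied to `v²` instead, with
`∫ |D(v²)| ≤ 2 ‖v‖₂ ‖Dv‖₂`. -/
theorem gn_global (N : ℕ) (hN : 0 < N) : ∃ C : ℝ≥0, ∀ v : EuclideanSpace ℝ (Fin N) → ℂ,
    ContDiff ℝ 1 v → HasCompactSupport v →
    ∫⁻ x, ‖v x‖ₑ ^ ((2 : ℝ) + 4 / (N : ℝ)) ≤
      C * (∫⁻ x, ‖fderiv ℝ v x‖ₑ ^ 2) * (∫⁻ x, ‖v x‖ₑ ^ 2) ^ ((2 : ℝ) / (N : ℝ)) := by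
  have cs : ∀ v : EuclideanSpace ℝ (Fin N) → ℂ, ContDiff ℝ 1 v →
      (∫⁻ x, ‖fderiv ℝ (fun y => v y ^ 2) x‖ₑ) ^ 2 ≤
        4 * ((∫⁻ x, ‖fderiv ℝ v x‖ₑ ^ 2) * ∫⁻ x, ‖v x‖ₑ ^ 2) := by
    intro v hv
    have hc := hv.continuous
    have hc' := hv.continuous_fderiv one_ne_zero
    calc _ ≤ (∫⁻ x, 2 * (‖v x‖ₑ * ‖fderiv ℝ v x‖ₑ)) ^ 2 := by
          gcongr with x; exact enorm_fderiv_pow_two_le hv x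
      _ = 4 * (∫⁻ x, (‖v x‖ₑ * ‖fderiv ℝ v x‖ₑ)) ^ 2 := by
          rw [lintegral_const_mul' _ _ (by simp), mul_pow]; norm_num
      _ ≤ _ := by
          gcongr
          rw [mul_comm (∫⁻ x, ‖fderiv ℝ v x‖ₑ ^ 2)]
          exact lintegral_cauchy_schwarz hc.enorm.aemeasurable hc'.enorm.aemeasurable
  have sqc : ∀ v : EuclideanSpace ℝ (Fin N) → ℂ, HasCompactSupport v →
      HasCompactSupport (fun y => v y ^ 2) := fun v hv =>
    hv.comp_left (g := fun z : ℂ => z ^ 2) (by simp)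
  rcases (by omega : N = 1 ∨ N = 2 ∨ 3 ≤ N) with rfl | rfl | h3
  · -- Here `∫ |v|⁶ ≤ (sup |v|⁴) ∫ |v|²`, and the supremum is bounded through `v²`.
    refine ⟨4, fun v hv hs => ?_⟩
    set D := ∫⁻ x, ‖fderiv ℝ v x‖ₑ ^ 2
    set A := ∫⁻ x, ‖v x‖ₑ ^ 2
    have hsup : ∀ x, ‖v x‖ₑ ^ 4 ≤ 4 * (D * A) := fun x => by
      refine le_trans ?_ (cs v hv)
      have := enorm_le_lintegral_fderiv_of_finrank_one (by simp) (hv.pow 2) (sqc v hs) x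
      rw [enorm_pow] at this
      calc ‖v x‖ₑ ^ 4 = (‖v x‖ₑ ^ 2) ^ 2 := by rw [← pow_mul]
        _ ≤ _ := by gcongr
    calc _ = ∫⁻ x, ‖v x‖ₑ ^ 4 * ‖v x‖ₑ ^ 2 := by
          congr! 2 with x
          rw [← pow_add, ← ENNReal.rpow_natCast]; norm_num
      _ ≤ ∫⁻ x, (4 * (D * A)) * ‖v x‖ₑ ^ 2 := by gcongr with x; exact hsup x
      _ = 4 * (D * A) * A := lintegral_const_mul _ (by have := hv.continuous; fun_prop)
      _ = _ := by
        have : (2 : ℝ) / ((1 : ℕ) : ℝ) = ((2 : ℕ) : ℝ) := by norm_num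
        rw [this, ENNReal.rpow_natCast]; push_cast; ring
  · refine ⟨lintegralPowLePowLIntegralFDerivConst (volume : Measure (EuclideanSpace ℝ (Fin 2))) 2 * 4,
      fun v hv hs => ?_⟩
    have h := lintegral_pow_le_pow_lintegral_fderiv
      (volume : Measure (EuclideanSpace ℝ (Fin 2))) (hv.pow 2) (sqc v hs) (p := 2)
      (by simpa using Real.HolderConjugate.two_two)
    calc _ = ∫⁻ x, ‖v x ^ 2‖ₑ ^ (2 : ℝ) := by
          congr! 2 with x
          rw [enorm_pow, ← ENNReal.rpow_natCast, ← ENNReal.rpow_mul]; norm_num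
      _ ≤ _ := h
      _ ≤ _ := mul_le_mul_right (by simpa using cs v hv) _
      _ = _ := by
        have : (2 : ℝ) / ((2 : ℕ) : ℝ) = 1 := by norm_num
        rw [this, ENNReal.rpow_one]; push_cast; ring
  · have h3' : (3 : ℝ) ≤ N := by exact_mod_cast h3
    -- `p` is the Sobolev exponent; `(N-2)/N + 2/N = 1` are the Hölder weights.
    set p : ℝ≥0 := 2 * N / (N - 2) with hp
    have hp' : (p : ℝ) = 2 * N / (N - 2) := by
      have : (2 : ℝ≥0) ≤ N := by exact_mod_cast (by omega : 2 ≤ N)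
      simp [hp, NNReal.coe_sub this]
    have hp0 : (p : ℝ) ≠ 0 := by
      rw [hp']; exact div_ne_zero (by positivity) (by linarith)
    have hN2 : (N : ℝ) - 2 ≠ 0 := by linarith
    refine ⟨SNormLESNormFDerivOfEqConst ℂ (volume : Measure (EuclideanSpace ℝ (Fin N))) 2 ^ 2,
      fun v hv hs => ?_⟩
    have h := eLpNorm_le_eLpNorm_fderiv_of_eq
      (volume : Measure (EuclideanSpace ℝ (Fin N))) hv hs (p := 2) (p' := p)
      (by norm_num) (by simpa using hN) (by
        rw [hp', finrank_euclideanSpace_fin]; push_cast; field_simp)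
    have hc := hv.continuous
    have hi : (∫⁻ x, ‖v x‖ₑ ^ (p : ℝ)) ^ ((N - 2 : ℝ) / N) = eLpNorm v p volume ^ 2 := by
      rw [eLpNorm_nnreal_eq_lintegral (by exact_mod_cast hp0), ← ENNReal.rpow_natCast,
        ← ENNReal.rpow_mul, hp']
      congr 1
      push_cast; field_simp
    calc _ = ∫⁻ x, (‖v x‖ₑ ^ (p : ℝ)) ^ ((N - 2 : ℝ) / N) * (‖v x‖ₑ ^ 2) ^ ((2 : ℝ) / N) := by
          congr! 2 with x
          rw [← ENNReal.rpow_natCast, ← ENNReal.rpow_mul, ← ENNReal.rpow_mul,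
            ← ENNReal.rpow_add_of_nonneg]
          · congr 1
            rw [hp']; push_cast; field_simp; ring
          · exact mul_nonneg p.2 (div_nonneg (by linarith) (by positivity))
          · positivity
      _ ≤ (∫⁻ x, ‖v x‖ₑ ^ (p : ℝ)) ^ ((N - 2 : ℝ) / N) * (∫⁻ x, ‖v x‖ₑ ^ 2) ^ ((2 : ℝ) / N) :=
          lintegral_mul_norm_pow_le (by fun_prop) (by fun_prop)
            (div_nonneg (by linarith) (by positivity)) (by positivity) (by field_simp; ring)
      _ ≤ _ := by
          gcongr
          rw [hi]
          refine (pow_le_pow_left' h 2).trans_eq ?_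
          rw [mul_pow, eLpNorm_nnreal_eq_lintegral two_ne_zero,
            ← ENNReal.rpow_natCast (_ ^ _), ← ENNReal.rpow_mul]
          norm_num

/-! ### Localisation and averaging over translates -/

lemma measurable_avg {N : ℕ} {f g : EuclideanSpace ℝ (Fin N) → ℝ≥0∞} (hf : Measurable f)
    (hg : Measurable g) : Measurable fun y => ∫⁻ x, f (x - y) * g x :=
  Measurable.lintegral_prod_right' (f := fun p : EuclideanSpace ℝ (Fin N) × _ =>
    f (p.2 - p.1) * g p.2) (by fun_prop)

/-- Tonelli and translation invariance: averaging the localisations of `g` by all the translates of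
the weight `f` gives back the integral of `g`. -/
lemma avg {N : ℕ} {f g : EuclideanSpace ℝ (Fin N) → ℝ≥0∞} (hf : Measurable f) (hg : Measurable g) :
    ∫⁻ y, ∫⁻ x, f (x - y) * g x = (∫⁻ z, f z) * ∫⁻ x, g x := by
  rw [lintegral_lintegral_swap]
  · rw [← lintegral_const_mul _ hg]
    congr 1 with x
    rw [lintegral_mul_const _ (by fun_prop), lintegral_sub_left_eq_self f x]
  · apply Measurable.aemeasurable
    simp only [Function.uncurry_def]
    fun_prop

lemma enorm_fderiv_smul_sq_le {E : Type*} [NormedAddCommGroup E] [NormedSpace ℝ E]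
    {χ : E → ℝ} {u : E → ℂ} {x : E} (hχ : DifferentiableAt ℝ χ x) (hu : DifferentiableAt ℝ u x) :
    ‖fderiv ℝ (fun z => χ z • u z) x‖ₑ ^ 2 ≤
      2 * (‖χ x‖ₑ ^ 2 * ‖fderiv ℝ u x‖ₑ ^ 2 + ‖fderiv ℝ χ x‖ₑ ^ 2 * ‖u x‖ₑ ^ 2) := by
  have h : ‖fderiv ℝ (fun z => χ z • u z) x‖ ≤ ‖χ x‖ * ‖fderiv ℝ u x‖ + ‖fderiv ℝ χ x‖ * ‖u x‖ := by
    rw [fderiv_fun_smul hχ hu]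
    refine (norm_add_le _ _).trans (add_le_add (norm_smul _ _).le ?_)
    exact (ContinuousLinearMap.norm_smulRight_apply _ _).le
  have h2 : ‖fderiv ℝ (fun z => χ z • u z) x‖ ^ 2 ≤
      2 * (‖χ x‖ ^ 2 * ‖fderiv ℝ u x‖ ^ 2 + ‖fderiv ℝ χ x‖ ^ 2 * ‖u x‖ ^ 2) := by
    nlinarith [norm_nonneg (fderiv ℝ (fun z => χ z • u z) x),
      sq_nonneg (‖χ x‖ * ‖fderiv ℝ u x‖ - ‖fderiv ℝ χ x‖ * ‖u x‖)]
  simp only [enorm_eq_nnnorm]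
  exact_mod_cast h2

lemma lintegral_rpow_ne_top {N : ℕ} {F : Type*} [NormedAddCommGroup F]
    {f : EuclideanSpace ℝ (Fin N) → F} (hf : Continuous f) (hs : HasCompactSupport f) {q : ℝ}
    (hq : 0 < q) : ∫⁻ z, ‖f z‖ₑ ^ q ≠ ⊤ := by
  have h := (hf.memLp_of_hasCompactSupport (p := ENNReal.ofReal q) (μ := volume) hs).2
  have := (eLpNorm_lt_top_iff_lintegral_rpow_enorm_lt_top (by simpa using hq) (by simp)).1 h
  rw [ENNReal.toReal_ofReal hq.le] at this
  exact this.ne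

/-- The inequality with gradient in place of Laplacian: `M` bounds the mass in every unit cube.
The global inequality is applied to `χ(· - y) u` for a bump function `χ`, and integrated over
`y`. -/
theorem gn_avg (N : ℕ) (hN : 0 < N) : ∃ C : ℝ≥0, ∀ u : EuclideanSpace ℝ (Fin N) → ℂ,
    ContDiff ℝ 1 u → ∀ M : ℝ≥0∞,
    (∀ y : EuclideanSpace ℝ (Fin N),
      ∫⁻ x in {x : EuclideanSpace ℝ (Fin N) | ∀ i, |x i - y i| ≤ 1 / 2}, ‖u x‖ₑ ^ 2 ≤ M) →
    ∫⁻ x, ‖u x‖ₑ ^ ((2 : ℝ) + 4 / (N : ℝ)) ≤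
      C * ((∫⁻ x, ‖u x‖ₑ ^ 2) + ∫⁻ x, ‖fderiv ℝ u x‖ₑ ^ 2) * M ^ ((2 : ℝ) / (N : ℝ)) := by
  obtain ⟨C, hC⟩ := gn_global N hN
  set q : ℝ := 2 + 4 / N with hq
  have hq0 : 0 < q := by positivity
  -- The support of `χ`, a ball of radius `1 / 2`, lies in the unit cube centred at the origin, so
  -- no covering argument is needed.
  let χ : ContDiffBump (0 : EuclideanSpace ℝ (Fin N)) := ⟨1 / 4, 1 / 2, by norm_num, by norm_num⟩
  have hχ : ContDiff ℝ 1 χ := χ.contDiff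
  have hχc := hχ.continuous
  have hχc' := hχ.continuous_fderiv one_ne_zero
  have hK0 : ∫⁻ z, ‖χ z‖ₑ ^ q ≠ 0 := by
    have h0 : ‖χ 0‖ₑ ^ q ≠ 0 := by
      rw [χ.one_of_mem_closedBall (by simp [χ])]; simp
    intro h
    rw [lintegral_eq_zero_iff (by fun_prop)] at h
    have hc : Continuous fun z => ‖χ z‖ₑ ^ q :=
      ENNReal.continuous_rpow_const.comp (by fun_prop)
    exact h0 (congrFun ((hc.ae_eq_iff_eq volume continuous_const).1 h) 0)
  have hKt : ∫⁻ z, ‖χ z‖ₑ ^ q ≠ ⊤ := lintegral_rpow_ne_top hχc χ.hasCompactSupport hq0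
  have hK2 : ∫⁻ z, ‖χ z‖ₑ ^ 2 ≠ ⊤ := by
    simpa using lintegral_rpow_ne_top hχc χ.hasCompactSupport two_pos
  have hKD : ∫⁻ z, ‖fderiv ℝ χ z‖ₑ ^ 2 ≠ ⊤ := by
    simpa using lintegral_rpow_ne_top hχc' (χ.hasCompactSupport.fderiv ℝ) two_pos
  set K := ∫⁻ z, ‖χ z‖ₑ ^ q
  set K2 := ∫⁻ z, ‖χ z‖ₑ ^ 2
  set KD := ∫⁻ z, ‖fderiv ℝ χ z‖ₑ ^ 2
  have hCt : K⁻¹ * (C * (2 * (K2 + KD))) ≠ ⊤ :=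
    ENNReal.mul_ne_top (ENNReal.inv_ne_top.2 hK0) (ENNReal.mul_ne_top ENNReal.coe_ne_top
      (ENNReal.mul_ne_top (by simp) (ENNReal.add_ne_top.2 ⟨hK2, hKD⟩)))
  refine ⟨(K⁻¹ * (C * (2 * (K2 + KD)))).toNNReal, fun u hu M hM => ?_⟩
  rw [ENNReal.coe_toNNReal hCt]
  have huc := hu.continuous
  have huc' := hu.continuous_fderiv one_ne_zero
  set A := ∫⁻ x, ‖u x‖ₑ ^ 2
  set D := ∫⁻ x, ‖fderiv ℝ u x‖ₑ ^ 2
  have hloc : ∀ y, ∫⁻ x, ‖χ (x - y)‖ₑ ^ q * ‖u x‖ₑ ^ q ≤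
      C * M ^ ((2 : ℝ) / (N : ℝ)) * (2 * ∫⁻ x, (‖χ (x - y)‖ₑ ^ 2 * ‖fderiv ℝ u x‖ₑ ^ 2 +
        ‖fderiv ℝ χ (x - y)‖ₑ ^ 2 * ‖u x‖ₑ ^ 2)) := by
    intro y
    have hχy : ContDiff ℝ 1 fun x => χ (x - y) := hχ.comp (contDiff_id.sub contDiff_const)
    have hsupp : HasCompactSupport fun x => χ (x - y) :=
      χ.hasCompactSupport.comp_homeomorph (Homeomorph.subRight y)
    have h := hC (fun x => χ (x - y) • u x) (hχy.smul hu) hsupp.smul_right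
    simp only [enorm_smul, ENNReal.mul_rpow_of_nonneg _ _ hq0.le] at h
    refine h.trans ?_
    rw [mul_assoc, mul_assoc, mul_comm (M ^ _)]
    gcongr
    · rw [← lintegral_const_mul' _ _ (by simp)]
      gcongr with x
      refine (enorm_fderiv_smul_sq_le (hχy.differentiable one_ne_zero x)
        (hu.differentiable one_ne_zero x)).trans_eq ?_
      rw [fderiv_comp_sub]
    · refine le_trans ?_ (hM y)
      rw [← lintegral_indicator]
      · refine lintegral_mono fun x => ?_
        by_cases hx : ∀ i, |x i - y i| ≤ 1 / 2
        · rw [Set.indicator_of_mem (by exact hx), mul_pow]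
          refine mul_le_of_le_one_left zero_le (pow_le_one' ?_ 2)
          rw [enorm_eq_nnnorm]
          have : ‖χ (x - y)‖ ≤ 1 := by
            rw [Real.norm_of_nonneg χ.nonneg]; exact χ.le_one
          exact ENNReal.coe_le_one_iff.2 (by exact_mod_cast this)
        · push Not at hx
          obtain ⟨i, hi⟩ := hx
          have h0 : χ (x - y) = 0 := by
            apply χ.zero_of_le_dist
            rw [dist_zero_right]
            have := PiLp.norm_apply_le (x - y) i
            simp only [PiLp.sub_apply, Real.norm_eq_abs] at this
            exact hi.le.trans this
          simp [h0]
      · simp only [Set.ofPred_forall]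
        exact MeasurableSet.iInter fun i => measurableSet_le (by fun_prop) (by fun_prop)
  have key : K * ∫⁻ x, ‖u x‖ₑ ^ q ≤
      C * M ^ ((2 : ℝ) / (N : ℝ)) * (2 * (K2 * D + KD * A)) := by
    rw [← avg (f := fun z => ‖χ z‖ₑ ^ q) (g := fun x => ‖u x‖ₑ ^ q) (by fun_prop) (by fun_prop)]
    refine (lintegral_mono hloc).trans ?_
    rw [← avg (f := fun z => ‖χ z‖ₑ ^ 2) (g := fun x => ‖fderiv ℝ u x‖ₑ ^ 2)
      (by fun_prop) (by fun_prop),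
      ← avg (f := fun z => ‖fderiv ℝ χ z‖ₑ ^ 2) (g := fun x => ‖u x‖ₑ ^ 2)
      (by fun_prop) (by fun_prop)]
    have hms : ∀ y, Measurable fun x => ‖χ (x - y)‖ₑ ^ 2 * ‖fderiv ℝ u x‖ₑ ^ 2 := fun y => by
      fun_prop
    simp only [lintegral_add_left (hms _)]
    have h1 := measurable_avg (f := fun z => ‖χ z‖ₑ ^ 2) (g := fun x => ‖fderiv ℝ u x‖ₑ ^ 2)
      (by fun_prop) (by fun_prop)
    have h2 := measurable_avg (f := fun z => ‖fderiv ℝ χ z‖ₑ ^ 2) (g := fun x => ‖u x‖ₑ ^ 2)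
      (by fun_prop) (by fun_prop)
    rw [lintegral_const_mul _ (by fun_prop), lintegral_const_mul _ (by fun_prop),
      lintegral_add_left h1]
  calc _ = K⁻¹ * (K * ∫⁻ x, ‖u x‖ₑ ^ q) := by
        rw [← mul_assoc, ENNReal.inv_mul_cancel hK0 hKt, one_mul]
    _ ≤ K⁻¹ * (C * M ^ ((2 : ℝ) / (N : ℝ)) * (2 * ((K2 + KD) * (A + D)))) := by
        refine mul_le_mul_right (key.trans ?_) _
        gcongr
        calc K2 * D + KD * A ≤ K2 * (A + D) + KD * (A + D) := by
              gcongr <;> simp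
          _ = _ := by ring
    _ = _ := by ring

/-- **Gagliardo–Nirenberg-type inequality with local mass.** There is `C = C(N) > 0`
such that for every Schwartz function `u : ℝ^N → ℂ`,
`∫ |u|^(2+4/N) ≤ C (∫|u|² + ∫|Δu|²) (sup_x ‖u‖_{L²(Q₁(x))})^(4/N)`,
where `Q₁(x)` is the cube centered at `x` with edge length `1`. -/
theorem gagliardo_nirenberg_local_mass (N : ℕ) (hN : 0 < N) :
    ∃ C : ℝ, 0 < C ∧ ∀ u : SchwartzMap (EuclideanSpace ℝ (Fin N)) ℂ,
      (∫ x : EuclideanSpace ℝ (Fin N), ‖u x‖ ^ ((2 : ℝ) + 4 / (N : ℝ))) ≤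
        C * ((∫ x : EuclideanSpace ℝ (Fin N), ‖u x‖ ^ 2) +
              ∫ x : EuclideanSpace ℝ (Fin N), ‖lap (fun y => u y) x‖ ^ 2) *
          (⨆ x : EuclideanSpace ℝ (Fin N), Real.sqrt
              (∫ y in {y : EuclideanSpace ℝ (Fin N) | ∀ i, |y i - x i| ≤ 1 / 2},
                ‖u y‖ ^ 2)) ^ ((4 : ℝ) / (N : ℝ)) := by
  obtain ⟨C, hC⟩ := gn_avg N hN
  refine ⟨2 * C + 1, by positivity, fun u => ?_⟩
  set S := ⨆ x : EuclideanSpace ℝ (Fin N), Real.sqrt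
    (∫ y in {y : EuclideanSpace ℝ (Fin N) | ∀ i, |y i - x i| ≤ 1 / 2}, ‖u y‖ ^ 2) with hS
  set H := (∫ x, ‖u x‖ ^ 2) + ∫ x, ‖lap (fun y => u y) x‖ ^ 2 with hH
  have hS0 : 0 ≤ S := Real.iSup_nonneg fun _ => Real.sqrt_nonneg _
  have hH0 : 0 ≤ H := by positivity
  have hu2 := integrable_norm_sq u
  have en : ∀ z : ℂ, ‖z‖ₑ ^ 2 = ENNReal.ofReal (‖z‖ ^ 2) := fun z => by
    rw [← ofReal_norm, ENNReal.ofReal_pow (norm_nonneg _)]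
  have hbdd : BddAbove (Set.range fun x : EuclideanSpace ℝ (Fin N) => Real.sqrt
      (∫ y in {y : EuclideanSpace ℝ (Fin N) | ∀ i, |y i - x i| ≤ 1 / 2}, ‖u y‖ ^ 2)) := by
    refine ⟨√(∫ x, ‖u x‖ ^ 2), ?_⟩
    rintro _ ⟨x, rfl⟩
    exact Real.sqrt_le_sqrt (setIntegral_le_integral hu2 (.of_forall fun y => by positivity))
  have h := hC u (u.smooth 1) (ENNReal.ofReal (S ^ 2)) fun y => by
    simp only [en]
    rw [← ofReal_integral_eq_lintegral_ofReal hu2.integrableOn (.of_forall fun y => by positivity)]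
    refine ENNReal.ofReal_le_ofReal ?_
    rw [← Real.sqrt_le_left hS0]
    exact le_ciSup hbdd y
  have hA : ∫⁻ x, ‖u x‖ₑ ^ 2 ≤ ENNReal.ofReal H := by
    simp only [en]
    rw [← ofReal_integral_eq_lintegral_ofReal hu2 (.of_forall fun y => by positivity)]
    exact ENNReal.ofReal_le_ofReal (le_add_of_nonneg_right (by positivity))
  have hSS : ENNReal.ofReal (S ^ 2) ^ ((2 : ℝ) / N) = ENNReal.ofReal (S ^ ((4 : ℝ) / N)) := by
    rw [ENNReal.ofReal_rpow_of_nonneg (by positivity) (by positivity), ← Real.rpow_natCast,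
      ← Real.rpow_mul hS0]
    congr 2; push_cast; ring
  rw [integral_eq_lintegral_of_nonneg_ae (.of_forall fun x => by positivity)
    (u.continuous.norm.rpow_const fun x => .inr (by positivity)).aestronglyMeasurable]
  refine ENNReal.toReal_le_of_le_ofReal (by positivity) ?_
  calc _ = ∫⁻ x, ‖u x‖ₑ ^ ((2 : ℝ) + 4 / N) := by
        congr 1 with x
        rw [← ofReal_norm, ENNReal.ofReal_rpow_of_nonneg (norm_nonneg _) (by positivity)]
    _ ≤ _ := h
    _ ≤ C * (ENNReal.ofReal H + ENNReal.ofReal H) * ENNReal.ofReal (S ^ ((4 : ℝ) / N)) := by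
        rw [hSS]
        gcongr
        exact lintegral_fderiv_sq_le u
    _ = ENNReal.ofReal (2 * C * H * S ^ ((4 : ℝ) / N)) := by
        rw [← ENNReal.ofReal_add hH0 hH0, ← ENNReal.ofReal_coe_nnreal,
          ← ENNReal.ofReal_mul (by positivity),
          ← ENNReal.ofReal_mul (by positivity)]
        congr 1; ring
    _ ≤ _ := by
        refine ENNReal.ofReal_le_ofReal ?_
        gcongr
        linarith
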